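/- arXiv:2101.12621 — 2 statements merged into one kernel-verified Lean document; each statement's English description precedes it below -/
import Mathlib

section
/- Let P be a finite pure weighted graded poset of rank d ≥ 2 with a standard weight scheme. (1) If P is lower regular at level 1 with constant N^low_1 ≥ 2, then P satisfies equations TL.1 and TL.2 with constants c^=_1 = 1/(N^low_1 − 1) and c^≠_1 = (N^low_1 − 2)/(N^low_1 − 1). (2) If in addition P is lower regular at level 2 with constant N^low_2, middle regular at level 1 with constant N^mid_1 ≥ 2, and ⅄-regular with constant R, then P satisfies equations TL.3 and TL.4 with constants c^=_2 = (N^low_2·N^low_1/N^mid_1 − 1)·R·(R−1)/((N^mid_1−1)·N^mid_1·(N^low_1−1)²) and c^≠_2 = ((N^low_2·N^low_1/N^mid_1 − 2)·R − (N^low_1 − 2))/((N^mid_1−1)·(N^low_1−1)). -/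
open Finset

attribute [local instance] Classical.propDecidable

noncomputable section

/-- A finite pure weighted graded poset of rank `d`, presented as a rank function
and a weight scheme on a finite partial order `P`. -/
structure WGP (P : Type) [Fintype P] [PartialOrder P] where
  /-- the rank of the poset -/
  d : ℤ
  /-- the rank function -/
  rk : P → ℤ
  rk_mono : Monotone rk
  rk_lb : ∀ x, -1 ≤ rk x
  rk_ub : ∀ x, rk x ≤ d
  rk_covBy : ∀ a b : P, a ⋖ b → rk b = rk a + 1
  bot_unique : ∃! x : P, rk x = -1
  isPure : ∀ x : P, ∃ y : P, rk y = d ∧ x ≤ y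
  /-- the weight function -/
  m : P → ℝ
  m_pos : ∀ x, 0 < m x
  /-- the transition probabilities: `p y x` is `p_{y → x}` -/
  p : P → P → ℝ
  p_nonneg : ∀ y x, 0 ≤ p y x
  p_pos_iff : ∀ y x, 0 < p y x ↔ x ⋖ y
  p_sum : ∀ y, 0 ≤ rk y → ∑ x ∈ univ.filter (fun x => x ⋖ y), p y x = 1
  m_eq : ∀ x, rk x < d → m x = ∑ y ∈ univ.filter (fun y => x ⋖ y), p y x * m y
  m_bot : ∀ x, rk x = -1 → m x = 1

/-- `T` has at most `n` eigenvalues greater than `c`, counted with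
(geometric) multiplicity. -/
def eigMultAboveLe {V : Type*} [AddCommGroup V] [Module ℝ V]
    (T : Module.End ℝ V) (c : ℝ) (n : ℕ) : Prop :=
  ∀ s : Finset ℝ, (∀ μ ∈ s, c < μ) →
    ∑ μ ∈ s, Module.finrank ℝ (T.eigenspace μ) ≤ n

/-- `μ` is the second largest eigenvalue of `T`, counted with multiplicity. -/
def IsSecondLargestEig {V : Type*} [AddCommGroup V] [Module ℝ V]
    (T : Module.End ℝ V) (μ : ℝ) : Prop :=
  T.HasEigenvalue μ ∧ eigMultAboveLe T μ 1 ∧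
    ∃ s : Finset ℝ, (∀ ν ∈ s, μ ≤ ν) ∧
      2 ≤ ∑ ν ∈ s, Module.finrank ℝ (T.eigenspace ν)

/-- `ν` is the least eigenvalue of `T`. -/
def IsLeastEig {V : Type*} [AddCommGroup V] [Module ℝ V]
    (T : Module.End ℝ V) (ν : ℝ) : Prop :=
  T.HasEigenvalue ν ∧ ∀ c : ℝ, T.HasEigenvalue c → ν ≤ c

/-- `λ(T) ≤ lam`, i.e. the second largest eigenvalue of `T` (with multiplicity)
is at most `lam` and the least eigenvalue is at least `-lam`. -/
def lamBd {V : Type*} [AddCommGroup V] [Module ℝ V]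
    (T : Module.End ℝ V) (lam : ℝ) : Prop :=
  eigMultAboveLe T lam 1 ∧ ∀ c : ℝ, T.HasEigenvalue c → -lam ≤ c

namespace WGP

variable {P : Type} [Fintype P] [PartialOrder P] (W : WGP P)

/-- The level set `P(i)`. -/
def lvl (i : ℤ) : Finset P := univ.filter (fun x => W.rk x = i)

/-- The weighted inner product on `C^i`. -/
def innerAt (i : ℤ) (f g : P → ℝ) : ℝ := ∑ x ∈ W.lvl i, W.m x * f x * g x

/-- The squared norm on `C^i`. -/
def normSqAt (i : ℤ) (f : P → ℝ) : ℝ := W.innerAt i f f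

/-- The norm on `C^i`. -/
def normAt (i : ℤ) (f : P → ℝ) : ℝ := Real.sqrt (W.normSqAt i f)

/-- The matrix of transition probabilities : entry `(y, x)` is `p_{y→x}`,
which vanishes unless `x ⋖ y`.  This is also the matrix of the up operator. -/
def upMat : Matrix P P ℝ := Matrix.of fun y x => W.p y x

/-- The matrix of the down operator. -/
def downMat : Matrix P P ℝ := Matrix.of fun x y => W.p y x * W.m y / W.m x

/-- The up operator `U`. -/
def Up (f : P → ℝ) : P → ℝ := W.upMat.mulVec f

/-- The down operator `D`. -/
def Down (f : P → ℝ) : P → ℝ := W.downMat.mulVec f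

/-- `chSum x y = Σ_{c ∈ Ch(y→x)} p(c)`, the total `p`-weight of maximal chains
from `x` up to `y` (the entry of the corresponding power of the transition
matrix). -/
def chSum (x y : P) : ℝ := (W.upMat ^ (W.rk y - W.rk x).toNat) y x

/-- The induced weight function of the link `P_x`. -/
def mL (x y : P) : ℝ := W.m y / W.m x * W.chSum x y

/-- The induced transition probabilities of the link `P_x` :
`pL x z y = (p_x)_{z → y}`. -/
def pL (x z y : P) : ℝ := W.p z y * W.chSum x y / W.chSum x z

/-- The level set `P_x(j)` of the link of `x`. -/
def linkLvl (x : P) (j : ℤ) : Finset P :=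
  univ.filter (fun y => x ≤ y ∧ W.rk y = W.rk x + 1 + j)

/-- The inner product of the link `P_x` at link-level `j`. -/
def innerL (x : P) (j : ℤ) (f g : P → ℝ) : ℝ :=
  ∑ y ∈ W.linkLvl x j, W.mL x y * f y * g y

/-- The matrix of the up operator of the link `P_x`. -/
def upMatL (x : P) : Matrix P P ℝ :=
  Matrix.of fun z y => if y ⋖ z ∧ x ≤ y then W.pL x z y else 0

/-- The matrix of the down operator of the link `P_x`. -/
def downMatL (x : P) : Matrix P P ℝ :=
  Matrix.of fun y z => if y ⋖ z then W.pL x z y * W.mL x z / W.mL x y else 0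

/-- The up operator of the link `P_x`. -/
def UpL (x : P) (f : P → ℝ) : P → ℝ := (W.upMatL x).mulVec f

/-- The down operator of the link `P_x`. -/
def DownL (x : P) (f : P → ℝ) : P → ℝ := (W.downMatL x).mulVec f

/-- The up-down walk `M^+_{x,0}` of the link `P_x`. -/
def MplusL (x : P) (f : P → ℝ) : P → ℝ := W.DownL x (W.UpL x f)

/-- The down-up walk `M^-_{x,0}` of the link `P_x`. -/
def MminusL (x : P) (f : P → ℝ) : P → ℝ := W.UpL x (W.DownL x f)

/-- The adjacency matrix. -/
def adjMat : Matrix P P ℝ := Matrix.of fun y x =>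
  if x = y then 0 else
    ∑ z ∈ univ.filter (fun z => x ⋖ z ∧ y ⋖ z),
      W.m z * W.p z x * W.p z y / ((1 - W.p z y) * W.m y)

/-- The adjacency operator. -/
def Adj (f : P → ℝ) : P → ℝ := W.adjMat.mulVec f

/-- The adjacency matrix of the link `P_x`. -/
def adjMatL (x : P) : Matrix P P ℝ := Matrix.of fun y w =>
  if w = y then 0 else
    ∑ z ∈ univ.filter (fun z => w ⋖ z ∧ y ⋖ z),
      W.mL x z * W.pL x z w * W.pL x z y / ((1 - W.pL x z y) * W.mL x y)

/-- The adjacency operator of the link `P_x`. -/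
def AdjL (x : P) (f : P → ℝ) : P → ℝ := (W.adjMatL x).mulVec f

/-- The up-down walk `M^+_l` as an endomorphism of `C^l`. -/
def MplusEnd (l : ℤ) : Module.End ℝ ({x : P // W.rk x = l} → ℝ) :=
  ((W.downMat * W.upMat).submatrix Subtype.val Subtype.val).mulVecLin

/-- The up-down walk `M^+_{x,0}` as an endomorphism of `C^0(P_x)`. -/
def MplusEndL (x : P) : Module.End ℝ ({y : P // x ⋖ y} → ℝ) :=
  ((W.downMatL x * W.upMatL x).submatrix Subtype.val Subtype.val).mulVecLin

/-- The adjacency operator `A_x` of the link `P_x` as an endomorphism of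
`C^0(P_x)`. -/
def AdjEndL (x : P) : Module.End ℝ ({y : P // x ⋖ y} → ℝ) :=
  ((W.adjMatL x).submatrix Subtype.val Subtype.val).mulVecLin

/-- A standard weight scheme. -/
def Standard : Prop :=
  ∀ y x : P, x ⋖ y → W.p y x = 1 / ((univ.filter (fun z => z ⋖ y)).card : ℝ)

/-- `P` is lower regular at level `i` with constant `N`. -/
def LowerRegAt (i : ℤ) (N : ℕ) : Prop :=
  ∀ y : P, W.rk y = i → (univ.filter (fun z => z ⋖ y)).card = N

/-- `P` is middle regular at level `i` with constant `N`. -/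
def MiddleRegAt (i : ℤ) (N : ℕ) : Prop :=
  ∀ x z : P, W.rk x = i + 1 → W.rk z = i - 1 → z < x →
    (univ.filter (fun y => z ⋖ y ∧ y ⋖ x)).card = N

/-- `P` is `∨∧`-regular at level `i` with constant `N`. -/
def WedgeRegAt (i : ℤ) (N : ℕ) : Prop :=
  ∀ y₁ y₂ : P, W.rk y₁ = i → W.rk y₂ = i → y₁ ≠ y₂ → (∃ z, y₁ ⋖ z ∧ y₂ ⋖ z) →
    (univ.filter (fun s => s ⋖ y₁ ∧ s ⋖ y₂)).card = N

/-- `P` is `⅄`-regular with constant `R`. -/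
def WyeReg (R : ℕ) : Prop :=
  ∀ u y₁ y₂ : P, W.rk u = 2 → W.rk y₁ = 0 → W.rk y₂ = 0 → y₁ ≠ y₂ →
    y₁ < u → y₂ < u →
    (univ.filter (fun z => y₁ ⋖ z ∧ y₂ ⋖ z ∧ z ⋖ u)).card = R

/-- Property UL.1 with constants `c`. -/
def UL1 (c : ℤ → ℝ) : Prop :=
  ∀ l : ℤ, 0 ≤ l → l < W.d → ∀ y : P, W.rk y = l → ∀ x : P, y ⋖ x →
    ∑ z ∈ univ.filter (fun z => z ⋖ y), W.p y z ^ 2 / W.chSum z x = c l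

/-- Property UL.2 with constants `c`. -/
def UL2 (c : ℤ → ℝ) : Prop :=
  ∀ l : ℤ, 0 ≤ l → l < W.d → ∀ y₁ y₂ : P, W.rk y₁ = l → W.rk y₂ = l → y₁ ≠ y₂ →
    ∀ x : P, y₁ ⋖ x → y₂ ⋖ x →
    ∑ z ∈ univ.filter (fun z => z ⋖ y₁ ∧ z ⋖ y₂),
      W.p y₁ z * W.p y₂ z / W.chSum z x = c l

/-- Property UL.3 with constants `c`. -/
def UL3 (c : ℤ → ℝ) : Prop :=
  ∀ l : ℤ, 0 ≤ l → l < W.d → ∀ y : P, W.rk y = l →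
    ∑ x ∈ univ.filter (fun x => y ⋖ x), W.m x * W.p x y ^ 2 = c l * W.m y

/-- Property AL. -/
def AL : Prop :=
  ∀ l : ℤ, 0 ≤ l → l ≤ W.d - 1 → ∀ x y : P, W.rk x = l → W.rk y = l → x ≠ y →
    ∑ z ∈ univ.filter (fun z => x ⋖ z ∧ y ⋖ z),
        W.m z * W.p z x * W.p z y / (1 - W.p z x)
    = ∑ z ∈ univ.filter (fun z => x ⋖ z ∧ y ⋖ z),
        W.m z * W.p z x * W.p z y *
          ∑ s ∈ univ.filter (fun s => s ⋖ x ∧ s ⋖ y),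
            W.p x s * W.p y s / (W.chSum s z - W.p z x * W.p x s)

/-- Equation TL.1 with constant `c`. -/
def TL1 (c : ℝ) : Prop :=
  ∀ y : P, W.rk y = 0 →
    c * W.m y = ∑ z ∈ univ.filter (fun z => y ⋖ z), W.m z * W.p z y ^ 2 *
      ∑ x ∈ univ.filter (fun x => x ⋖ z ∧ x ≠ y), W.p z x / (1 - W.p z x) ^ 2

/-- Equation TL.2 with constant `c`. -/
def TL2 (c : ℝ) : Prop :=
  ∀ y₁ y₂ : P, W.rk y₁ = 0 → W.rk y₂ = 0 → y₁ ≠ y₂ →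
    c * ∑ z ∈ univ.filter (fun z => y₁ ⋖ z ∧ y₂ ⋖ z),
          W.m z * W.p z y₁ * W.p z y₂ / (1 - W.p z y₁)
    = ∑ z ∈ univ.filter (fun z => y₁ ⋖ z ∧ y₂ ⋖ z),
        W.m z * W.p z y₁ * W.p z y₂ *
          ∑ x ∈ univ.filter (fun x => x ⋖ z ∧ x ≠ y₁ ∧ x ≠ y₂),
            W.p z x / (1 - W.p z x) ^ 2

/-- Equation TL.3 with constant `c`. -/
def TL3 (c : ℝ) : Prop :=
  ∀ y : P, W.rk y = 0 →
    c * W.m y =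
      ∑ x ∈ univ.filter (fun x => W.rk x = 0 ∧ x ≠ y),
        ∑ z ∈ univ.filter (fun z => x ⋖ z ∧ y ⋖ z),
          ∑ w ∈ univ.filter (fun w => w ≠ z ∧ x ⋖ w ∧ y ⋖ w),
            ∑ u ∈ univ.filter (fun u => z ⋖ u ∧ w ⋖ u),
              W.m u * W.p u z * W.p u w * W.p w y * W.p z y * W.p w x * W.p z x /
                (W.chSum x u * (1 - W.p u z * W.p z x / W.chSum x u) *
                  (1 - W.p w x) * (1 - W.p z x))

/-- Equation TL.4 with constant `c`. -/
def TL4 (c : ℝ) : Prop :=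
  ∀ y₁ y₂ : P, W.rk y₁ = 0 → W.rk y₂ = 0 → y₁ ≠ y₂ →
    c * ∑ z ∈ univ.filter (fun z => y₁ ⋖ z ∧ y₂ ⋖ z),
          W.m z * W.p z y₁ * W.p z y₂ / (1 - W.p z y₁)
    = ∑ x ∈ univ.filter (fun x => W.rk x = 0 ∧ x ≠ y₁ ∧ x ≠ y₂),
        ∑ z ∈ univ.filter (fun z => x ⋖ z ∧ y₂ ⋖ z),
          ∑ w ∈ univ.filter (fun w => w ≠ z ∧ x ⋖ w ∧ y₁ ⋖ w),
            ∑ u ∈ univ.filter (fun u => z ⋖ u ∧ w ⋖ u),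
              W.m u * W.p u z * W.p u w * W.p w y₁ * W.p z y₂ * W.p w x * W.p z x /
                (W.chSum x u * (1 - W.p u z * W.p z x / W.chSum x u) *
                  (1 - W.p w x) * (1 - W.p z x))

/-- The induced function `f̂_x ∈ C^0(P_x)` of `f ∈ C^0`. -/
def hatF (x : P) (f : P → ℝ) : P → ℝ := fun z =>
  (1 / (1 - W.p z x)) * ∑ y ∈ univ.filter (fun y => y ≠ x ∧ y ⋖ z), W.p z y * f y

/-- `P` is connected: the Markov chain `M^+_0` on `P(0)` is irreducible. -/
def Connected : Prop :=
  ∀ y z : P, W.rk y = 0 → W.rk z = 0 →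
    ∃ j : ℕ, 0 < j ∧ ((W.downMat * W.upMat) ^ j) z y ≠ 0

/-- The link `P_x` is connected: the Markov chain `M^+_{x,0}` on `P_x(0)` is
irreducible. -/
def LinkConnected (x : P) : Prop :=
  ∀ y z : P, x ⋖ y → x ⋖ z →
    ∃ j : ℕ, 0 < j ∧ ((W.downMatL x * W.upMatL x) ^ j) z y ≠ 0

/-- `c` is a nontrivial eigenvalue of the adjacency operator `A` of `P`,
i.e. one with an eigenvector orthogonal to the constants. -/
def IsNontrivEigAdj (c : ℝ) : Prop :=
  ∃ f : P → ℝ, (∃ y, W.rk y = 0 ∧ f y ≠ 0) ∧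
    (∀ y, W.rk y = 0 → W.Adj f y = c * f y) ∧
    W.innerAt 0 f (fun _ => 1) = 0

/-- `c` is a nontrivial eigenvalue of the adjacency operator `A_x` of the
link `P_x`. -/
def IsNontrivEigAdjL (x : P) (c : ℝ) : Prop :=
  ∃ f : P → ℝ, (∃ y, x ⋖ y ∧ f y ≠ 0) ∧
    (∀ y, x ⋖ y → W.AdjL x f y = c * f y) ∧
    W.innerL x 0 f (fun _ => 1) = 0

end WGP

/-!
Uniform transition probabilities make all terms of each sum below a fixed top element equal, so
every equation is a count. In `TL3` and `TL4` the terms are the paths `y₁ ⋖ w ⋗ x ⋖ z ⋗ y₂` below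
some `u` of rank two. For fixed `u` and `x`, ⅄-regularity leaves `R` choices for each of `z` and
`w`, and the excluded case `z = w` costs the number of common covers of `x`, `y₁`, `y₂` below `u`.
If `y₁ = y₂` that number is `R`; otherwise summing it over `x` counts the `N₁ - 2` other elements
below each of the `R` common covers of `y₁` and `y₂`. The number of choices of `x` comes from
counting the chains `x ⋖ z ⋖ u` in two ways, and the left-hand sides expand over the same `u`
because `m` is harmonic.
-/

section Erase

variable {α : Type*}

lemma filter_and_ne_eq_erase [Fintype α] (p : α → Prop) (a : α) :
    univ.filter (fun x => p x ∧ x ≠ a) = (univ.filter p).erase a := by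
  ext; simp [and_comm]

lemma filter_and_ne_and_ne_eq_erase_erase [Fintype α] (p : α → Prop) (a b : α) :
    univ.filter (fun x => p x ∧ x ≠ a ∧ x ≠ b) = ((univ.filter p).erase a).erase b := by
  ext
  simp only [mem_filter, mem_univ, true_and, mem_erase]
  tauto

lemma cast_card_erase_erase {𝕜 : Type*} [Ring 𝕜] {s : Finset α} {a b : α} (ha : a ∈ s)
    (hb : b ∈ s) (hab : a ≠ b) : (#((s.erase a).erase b) : 𝕜) = #s - 2 := by
  rw [cast_card_erase_of_mem (mem_erase.2 ⟨hab.symm, hb⟩), cast_card_erase_of_mem ha, sub_sub,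
    one_add_one_eq_two]

lemma card_filter_product_ne_add_card_inter (s t : Finset α) :
    #((s ×ˢ t).filter fun q => q.1 ≠ q.2) + #(s ∩ t) = #s * #t := by
  have hdiag : (s ×ˢ t).filter (fun q => q.1 = q.2) = (s ∩ t).diag := by
    ext
    grind
  rw [← card_product, ← diag_card (s ∩ t), ← hdiag, add_comm, card_filter_add_card_filter_not]

end Erase

namespace WGP

variable {P : Type} [Fintype P] [PartialOrder P] (W : WGP P)

/-- The elements covering both `x` and `y` and covered by `u`, which `WGP.WyeReg` counts. -/
def commonCovers (u x y : P) : Finset P := univ.filter fun z => x ⋖ z ∧ y ⋖ z ∧ z ⋖ u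

/-- The elements of `P(0)` below `u`. -/
def verticesBelow (u : P) : Finset P := univ.filter fun x => W.rk x = 0 ∧ x < u

/-- The elements of `P(2)` above both `y₁` and `y₂`. -/
def facesAbove (y₁ y₂ : P) : Finset P := univ.filter fun u => W.rk u = 2 ∧ y₁ < u ∧ y₂ < u

/-- The paths `y₁ ⋖ w ⋗ x ⋖ z ⋗ y₂` below `u` with `x ∉ {y₁, y₂}` and `w ≠ z`, encoded as
`⟨x, z, w⟩`.  These index the terms of `WGP.TL3` (for `y₁ = y₂`) and `WGP.TL4` with top `u`. -/
def zigzags (u y₁ y₂ : P) : Finset (Σ _ : P, P × P) :=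
  (((W.verticesBelow u).erase y₁).erase y₂).sigma fun x =>
    (commonCovers u x y₂ ×ˢ commonCovers u x y₁).filter fun q => q.1 ≠ q.2

/-- Every transition from `P(i)` has probability `1 / N`.  This is what a standard weight scheme
amounts to at a level where `P` is lower regular with constant `N`. -/
def UniformAt (i : ℤ) (N : ℕ) : Prop := ∀ z x : P, W.rk z = i → x ⋖ z → W.p z x = 1 / (N : ℝ)

/-- The summand of `WGP.TL3` (for `y₁ = y₂`) and `WGP.TL4` at the path `y₁ ⋖ w ⋗ x ⋖ z ⋗ y₂`
below `u`. -/
def zigzagWeight (y₁ y₂ x z w u : P) : ℝ :=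
  W.m u * W.p u z * W.p u w * W.p w y₁ * W.p z y₂ * W.p w x * W.p z x /
    (W.chSum x u * (1 - W.p u z * W.p z x / W.chSum x u) * (1 - W.p w x) * (1 - W.p z x))

variable {W} {i : ℤ} {N N₁ N₂ M R : ℕ} {u w x y y₁ y₂ z : P}

@[simp]
lemma mem_commonCovers : z ∈ commonCovers u x y ↔ x ⋖ z ∧ y ⋖ z ∧ z ⋖ u := by
  simp [commonCovers]

@[simp]
lemma mem_verticesBelow : x ∈ W.verticesBelow u ↔ W.rk x = 0 ∧ x < u := by
  simp [verticesBelow]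

@[simp]
lemma mem_facesAbove : u ∈ W.facesAbove y₁ y₂ ↔ W.rk u = 2 ∧ y₁ < u ∧ y₂ < u := by
  simp [facesAbove]

@[simp]
lemma mem_zigzags {t : Σ _ : P, P × P} : t ∈ W.zigzags u y₁ y₂ ↔
    t.1 ∈ ((W.verticesBelow u).erase y₁).erase y₂ ∧ t.2.1 ∈ commonCovers u t.1 y₂ ∧
      t.2.2 ∈ commonCovers u t.1 y₁ ∧ t.2.1 ≠ t.2.2 := by
  simp only [zigzags, mem_sigma, mem_filter, mem_product, and_assoc]

lemma p_eq_zero (h : ¬ x ⋖ y) : W.p y x = 0 :=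
  (W.p_nonneg y x).eq_of_not_lt' fun hpos => h ((W.p_pos_iff y x).1 hpos)

lemma Standard.uniformAt (hstd : W.Standard) (h : W.LowerRegAt i N) : W.UniformAt i N :=
  fun z x hz hxz => by rw [hstd z x hxz, h z hz]

lemma UniformAt.lowerRegAt (h : W.UniformAt i N) (hi : 0 ≤ i) : W.LowerRegAt i N := by
  intro z hz
  have hsum : (#(univ.filter fun x => x ⋖ z) : ℝ) / N = 1 := by
    rw [← W.p_sum z (hz ▸ hi), sum_congr rfl fun x hx => h z x hz (mem_filter.1 hx).2]
    simp [div_eq_mul_inv]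
  exact_mod_cast eq_of_div_eq_one hsum

lemma UniformAt.cast_ne_zero (h : W.UniformAt i N) (hz : W.rk z = i) (hxz : x ⋖ z) :
    (N : ℝ) ≠ 0 := by
  have hpos := (W.p_pos_iff z x).2 hxz
  rw [h z x hz hxz] at hpos
  exact (one_div_pos.1 hpos).ne'

lemma UniformAt.one_sub_p (h : W.UniformAt i N) (hz : W.rk z = i) (hxz : x ⋖ z) :
    1 - W.p z x = ((N : ℝ) - 1) / N := by
  rw [h z x hz hxz, one_sub_div (h.cast_ne_zero hz hxz)]

lemma UniformAt.m_eq_sum_div (h : W.UniformAt (i + 1) N) (hi : i < W.d) (hx : W.rk x = i) :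
    W.m x = (∑ z ∈ univ.filter (fun z => x ⋖ z), W.m z) / N := by
  rw [W.m_eq x (hx ▸ hi), sum_div]
  refine sum_congr rfl fun z hz => ?_
  have hxz : x ⋖ z := (mem_filter.1 hz).2
  rw [h z x (by rw [W.rk_covBy x z hxz, hx]) hxz, one_div_mul_eq_div]

lemma UniformAt.sum_p_div_one_sub_p_sq (h : W.UniformAt i N) (hz : W.rk z = i) {s : Finset P}
    (hs : ∀ x ∈ s, x ⋖ z) :
    ∑ x ∈ s, W.p z x / (1 - W.p z x) ^ 2 = #s * (N / ((N : ℝ) - 1) ^ 2) := by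
  rw [← nsmul_eq_mul]
  refine sum_eq_card_nsmul fun x hx => ?_
  have hN := h.cast_ne_zero hz (hs x hx)
  rw [h.one_sub_p hz (hs x hx), h z x hz (hs x hx)]
  field_simp

lemma chSum_eq_sum_of_rk_eq_add_two (h : W.rk u = W.rk x + 2) :
    W.chSum x u = ∑ z ∈ univ.filter (fun z => x ⋖ z ∧ z ⋖ u), W.p u z * W.p z x := by
  have hrk : (W.rk u - W.rk x).toNat = 2 := by omega
  rw [chSum, hrk, pow_two, Matrix.mul_apply, sum_filter]
  refine sum_congr rfl fun z _ => ?_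
  split_ifs with hz
  · rfl
  · obtain hxz | hzu := not_and_or.1 hz
    · simp [upMat, p_eq_zero hxz]
    · simp [upMat, p_eq_zero hzu]

lemma UniformAt.chSum_eq (h₁ : W.UniformAt i N₁) (h₂ : W.UniformAt (i + 1) N₂)
    (hM : W.MiddleRegAt i M) (hx : W.rk x = i - 1) (hu : W.rk u = i + 1) (hxu : x < u) :
    W.chSum x u = M / ((N₁ : ℝ) * N₂) := by
  rw [chSum_eq_sum_of_rk_eq_add_two (by omega), ← hM u x hu hx hxu, div_eq_mul_one_div,
    ← nsmul_eq_mul]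
  refine sum_eq_card_nsmul fun z hz => ?_
  obtain ⟨hxz, hzu⟩ := (mem_filter.1 hz).2
  rw [h₂ u z hu hzu, h₁ z x (by rw [W.rk_covBy x z hxz, hx]; ring) hxz]
  ring

theorem UniformAt.tl1 (h₁ : W.UniformAt 1 N) (hN : 2 ≤ N) (hd : 1 ≤ W.d) :
    W.TL1 (1 / ((N : ℝ) - 1)) := by
  intro y hy
  have hN' : (2 : ℝ) ≤ N := by exact_mod_cast hN
  have hN1 : (N : ℝ) - 1 ≠ 0 := by linarith
  rw [UniformAt.m_eq_sum_div (i := 0) h₁ (by omega) hy, sum_div, mul_sum]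
  refine sum_congr rfl fun z hz => ?_
  have hyz : y ⋖ z := (mem_filter.1 hz).2
  have hrz : W.rk z = 1 := by rw [W.rk_covBy y z hyz, hy, zero_add]
  rw [h₁.sum_p_div_one_sub_p_sq hrz (by simp +contextual), filter_and_ne_eq_erase,
    cast_card_erase_of_mem (by simpa using hyz), h₁.lowerRegAt zero_le_one z hrz,
    h₁ z y hrz hyz]
  field_simp

theorem UniformAt.tl2 (h₁ : W.UniformAt 1 N) : W.TL2 (((N : ℝ) - 2) / ((N : ℝ) - 1)) := by
  intro y₁ y₂ hy₁ _ hne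
  rw [mul_sum]
  refine sum_congr rfl fun z hz => ?_
  obtain ⟨h₁z, h₂z⟩ := (mem_filter.1 hz).2
  have hrz : W.rk z = 1 := by rw [W.rk_covBy y₁ z h₁z, hy₁, zero_add]
  have hN := h₁.cast_ne_zero hrz h₁z
  rw [h₁.sum_p_div_one_sub_p_sq hrz (by simp +contextual), filter_and_ne_and_ne_eq_erase_erase,
    cast_card_erase_erase (by simpa using h₁z) (by simpa using h₂z) hne,
    h₁.lowerRegAt zero_le_one z hrz, h₁.one_sub_p hrz h₁z]
  field_simp

lemma MiddleRegAt.card_commonCovers_self (hM : W.MiddleRegAt 1 M) (hu : W.rk u = 2)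
    (hy : W.rk y = 0) (hyu : y < u) : #(commonCovers u y y) = M := by
  simpa [commonCovers] using hM u y hu hy hyu

lemma card_verticesBelow_mul (h₁ : W.LowerRegAt 1 N₁) (h₂ : W.LowerRegAt 2 N₂)
    (hM : W.MiddleRegAt 1 M) (hu : W.rk u = 2) : #(W.verticesBelow u) * M = N₂ * N₁ := by
  rw [← h₂ u hu]
  refine card_mul_eq_card_mul (fun x z => x ⋖ z) (fun x hx => ?_) fun z hz => ?_
  · rw [mem_verticesBelow] at hx
    rw [← hM u x hu hx.1 hx.2, bipartiteAbove, filter_filter]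
    simp only [and_comm]
  · have hzu : z ⋖ u := (mem_filter.1 hz).2
    have hrz : W.rk z = 1 := by have := W.rk_covBy z u hzu; omega
    rw [← h₁ z hrz, bipartiteBelow]
    congr 1
    ext x
    simp only [mem_filter, mem_verticesBelow, mem_univ, true_and, and_iff_right_iff_imp]
    exact fun hxz => ⟨by have := W.rk_covBy x z hxz; omega, hxz.lt.trans hzu.lt⟩

lemma cast_card_verticesBelow (h₁ : W.LowerRegAt 1 N₁) (h₂ : W.LowerRegAt 2 N₂)
    (hM : W.MiddleRegAt 1 M) (hM0 : M ≠ 0) (hu : W.rk u = 2) :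
    (#(W.verticesBelow u) : ℝ) = N₂ * N₁ / M := by
  rw [eq_div_iff (Nat.cast_ne_zero.2 hM0)]
  exact_mod_cast card_verticesBelow_mul h₁ h₂ hM hu

lemma WyeReg.card_commonCovers (hR : W.WyeReg R) (hu : W.rk u = 2)
    (hx : x ∈ W.verticesBelow u) (hy : y ∈ W.verticesBelow u) (hxy : x ≠ y) :
    #(commonCovers u x y) = R := by
  rw [mem_verticesBelow] at hx hy
  exact hR u x y hu hx.1 hy.1 hxy hx.2 hy.2

lemma WyeReg.cast_card_zigzags (hR : W.WyeReg R) (hu : W.rk u = 2)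
    (hy₁ : y₁ ∈ W.verticesBelow u) (hy₂ : y₂ ∈ W.verticesBelow u) :
    (#(W.zigzags u y₁ y₂) : ℝ) = ∑ x ∈ ((W.verticesBelow u).erase y₁).erase y₂,
      ((R : ℝ) ^ 2 - #(commonCovers u x y₂ ∩ commonCovers u x y₁)) := by
  rw [zigzags, card_sigma, Nat.cast_sum]
  refine sum_congr rfl fun x hx => ?_
  simp only [mem_erase] at hx
  have hcard := card_filter_product_ne_add_card_inter (commonCovers u x y₂) (commonCovers u x y₁)
  rw [hR.card_commonCovers hu hx.2.2 hy₁ hx.2.1, hR.card_commonCovers hu hx.2.2 hy₂ hx.1] at hcard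
  rw [eq_sub_iff_add_eq, sq]
  exact_mod_cast hcard

lemma WyeReg.cast_card_zigzags_self (hR : W.WyeReg R) (hu : W.rk u = 2)
    (hy : y ∈ W.verticesBelow u) :
    (#(W.zigzags u y y) : ℝ) = (#(W.verticesBelow u) - 1) * (R * (R - 1)) := by
  rw [hR.cast_card_zigzags hu hy hy, erase_idem, ← cast_card_erase_of_mem hy, ← nsmul_eq_mul]
  refine sum_eq_card_nsmul fun x hx => ?_
  rw [mem_erase] at hx
  rw [inter_self, hR.card_commonCovers hu hx.2 hy hx.1]
  ring

lemma WyeReg.sum_card_commonCovers_inter (hR : W.WyeReg R) (h₁ : W.LowerRegAt 1 N)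
    (hu : W.rk u = 2) (hy₁ : y₁ ∈ W.verticesBelow u) (hy₂ : y₂ ∈ W.verticesBelow u)
    (hne : y₁ ≠ y₂) :
    ∑ x ∈ ((W.verticesBelow u).erase y₁).erase y₂,
      (#(commonCovers u x y₂ ∩ commonCovers u x y₁) : ℝ) = R * (N - 2) := by
  set X := ((W.verticesBelow u).erase y₁).erase y₂
  have habove : ∀ x ∈ X, commonCovers u x y₂ ∩ commonCovers u x y₁ =
      (commonCovers u y₁ y₂).bipartiteAbove (fun x z => x ⋖ z) x := by
    intro x _
    ext z
    simp only [mem_inter, mem_commonCovers, mem_bipartiteAbove]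
    tauto
  have hbelow : ∀ z ∈ commonCovers u y₁ y₂,
      (#(X.bipartiteBelow (fun x z => x ⋖ z) z) : ℝ) = N - 2 := by
    intro z hz
    obtain ⟨h₁z, h₂z, hzu⟩ := mem_commonCovers.1 hz
    have hrz : W.rk z = 1 := by have := W.rk_covBy z u hzu; omega
    have hX : X.bipartiteBelow (fun x z => x ⋖ z) z =
        ((univ.filter fun x => x ⋖ z).erase y₁).erase y₂ := by
      ext x
      simp only [X, mem_bipartiteBelow, mem_erase, mem_verticesBelow, mem_filter, mem_univ,
        true_and]
      refine ⟨by tauto, fun ⟨hx₂, hx₁, hxz⟩ => ⟨⟨hx₂, hx₁, ?_, hxz.lt.trans hzu.lt⟩, hxz⟩⟩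
      have := W.rk_covBy x z hxz
      omega
    rw [hX, cast_card_erase_erase (by simpa using h₁z) (by simpa using h₂z) hne, h₁ z hrz]
  rw [sum_congr rfl fun x hx => by rw [habove x hx], ← Nat.cast_sum,
    sum_card_bipartiteAbove_eq_sum_card_bipartiteBelow, Nat.cast_sum, sum_congr rfl hbelow,
    sum_const, nsmul_eq_mul, hR.card_commonCovers hu hy₁ hy₂ hne]

lemma WyeReg.cast_card_zigzags_of_ne (hR : W.WyeReg R) (h₁ : W.LowerRegAt 1 N)
    (hu : W.rk u = 2) (hy₁ : y₁ ∈ W.verticesBelow u) (hy₂ : y₂ ∈ W.verticesBelow u)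
    (hne : y₁ ≠ y₂) :
    (#(W.zigzags u y₁ y₂) : ℝ) = R * ((#(W.verticesBelow u) - 2) * R - (N - 2)) := by
  rw [hR.cast_card_zigzags hu hy₁ hy₂, sum_sub_distrib, sum_const, nsmul_eq_mul,
    cast_card_erase_erase hy₁ hy₂ hne, hR.sum_card_commonCovers_inter h₁ hu hy₁ hy₂ hne]
  ring

lemma sum_zigzags (f : P → P → P → P → ℝ) (y₁ y₂ : P) :
    ∑ x ∈ univ.filter (fun x => W.rk x = 0 ∧ x ≠ y₁ ∧ x ≠ y₂),
      ∑ z ∈ univ.filter (fun z => x ⋖ z ∧ y₂ ⋖ z),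
        ∑ w ∈ univ.filter (fun w => w ≠ z ∧ x ⋖ w ∧ y₁ ⋖ w),
          ∑ u ∈ univ.filter (fun u => z ⋖ u ∧ w ⋖ u), f x z w u =
      ∑ u ∈ W.facesAbove y₁ y₂, ∑ t ∈ W.zigzags u y₁ y₂, f t.1 t.2.1 t.2.2 u := by
  simp only [sum_sigma']
  refine sum_nbij' (fun t => ⟨t.2.2.2, t.1, t.2.1, t.2.2.1⟩)
    (fun t => ⟨t.2.1, t.2.2.1, t.2.2.2, t.1⟩) ?_ ?_ (fun _ _ => rfl) (fun _ _ => rfl)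
    fun _ _ => rfl
  · rintro ⟨x, z, w, u⟩ ht
    simp only [mem_sigma, mem_filter, mem_univ, true_and] at ht
    obtain ⟨⟨hx, hx₁, hx₂⟩, ⟨hxz, h₂z⟩, ⟨hwz, hxw, h₁w⟩, hzu, hwu⟩ := ht
    have hu : W.rk u = 2 := by
      have := W.rk_covBy x z hxz
      have := W.rk_covBy z u hzu
      omega
    simp [*, hwz.symm, hxz.lt.trans hzu.lt, h₁w.lt.trans hwu.lt, h₂z.lt.trans hzu.lt]
  · rintro ⟨u, x, z, w⟩ ht
    simp only [mem_sigma, mem_facesAbove, mem_zigzags, mem_erase, mem_verticesBelow,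
      mem_commonCovers, mem_filter, mem_univ, true_and] at ht ⊢
    tauto

lemma UniformAt.zigzagWeight_eq (h₁ : W.UniformAt 1 N₁) (h₂ : W.UniformAt 2 N₂)
    (hM : W.MiddleRegAt 1 M) (hM0 : M ≠ 0) (hu : W.rk u = 2) (hx : x ∈ W.verticesBelow u)
    (hz : z ∈ commonCovers u x y₂) (hw : w ∈ commonCovers u x y₁) :
    W.zigzagWeight y₁ y₂ x z w u =
      W.m u / ((N₂ : ℝ) * N₁ * ((M : ℝ) - 1) * ((N₁ : ℝ) - 1) ^ 2) := by
  obtain ⟨hx, hxu⟩ := mem_verticesBelow.1 hx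
  obtain ⟨hxz, h₂z, hzu⟩ := mem_commonCovers.1 hz
  obtain ⟨hxw, h₁w, hwu⟩ := mem_commonCovers.1 hw
  have hrz : W.rk z = 1 := by rw [W.rk_covBy x z hxz, hx, zero_add]
  have hrw : W.rk w = 1 := by rw [W.rk_covBy x w hxw, hx, zero_add]
  have hN₁ := h₁.cast_ne_zero hrz hxz
  have hN₂ := h₂.cast_ne_zero hu hzu
  have hM0' : (M : ℝ) ≠ 0 := Nat.cast_ne_zero.2 hM0
  have hlink : 1 - W.p u z * W.p z x / W.chSum x u = ((M : ℝ) - 1) / M := by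
    rw [h₁.chSum_eq h₂ hM hx hu hxu, h₂ u z hu hzu, h₁ z x hrz hxz]
    field_simp
  rw [zigzagWeight, hlink, h₁.chSum_eq h₂ hM hx hu hxu, h₁.one_sub_p hrz hxz, h₁.one_sub_p hrw hxw,
    h₂ u z hu hzu, h₂ u w hu hwu, h₁ z x hrz hxz, h₁ w x hrw hxw, h₁ z y₂ hrz h₂z,
    h₁ w y₁ hrw h₁w]
  field_simp

lemma UniformAt.sum_zigzagWeight (h₁ : W.UniformAt 1 N₁) (h₂ : W.UniformAt 2 N₂)
    (hM : W.MiddleRegAt 1 M) (hM0 : M ≠ 0) (y₁ y₂ : P) :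
    ∑ x ∈ univ.filter (fun x => W.rk x = 0 ∧ x ≠ y₁ ∧ x ≠ y₂),
      ∑ z ∈ univ.filter (fun z => x ⋖ z ∧ y₂ ⋖ z),
        ∑ w ∈ univ.filter (fun w => w ≠ z ∧ x ⋖ w ∧ y₁ ⋖ w),
          ∑ u ∈ univ.filter (fun u => z ⋖ u ∧ w ⋖ u), W.zigzagWeight y₁ y₂ x z w u =
      ∑ u ∈ W.facesAbove y₁ y₂, #(W.zigzags u y₁ y₂) *
        (W.m u / ((N₂ : ℝ) * N₁ * ((M : ℝ) - 1) * ((N₁ : ℝ) - 1) ^ 2)) := by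
  rw [sum_zigzags (W.zigzagWeight y₁ y₂)]
  refine sum_congr rfl fun u hu => ?_
  rw [← nsmul_eq_mul]
  refine sum_eq_card_nsmul fun t ht => ?_
  obtain ⟨hx, hz, hw, -⟩ := mem_zigzags.1 ht
  exact h₁.zigzagWeight_eq h₂ hM hM0 (mem_facesAbove.1 hu).1
    (mem_of_mem_erase (mem_of_mem_erase hx)) hz hw

lemma UniformAt.sum_m_commonUpperCovers (h₂ : W.UniformAt 2 N) (hd : 2 ≤ W.d)
    (hy₁ : W.rk y₁ = 0) (y₂ : P) :
    ∑ z ∈ univ.filter (fun z => y₁ ⋖ z ∧ y₂ ⋖ z), W.m z =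
      ∑ u ∈ W.facesAbove y₁ y₂, #(commonCovers u y₁ y₂) * (W.m u / N) := by
  have hm : ∀ z ∈ univ.filter (fun z => y₁ ⋖ z ∧ y₂ ⋖ z),
      W.m z = ∑ u ∈ univ.filter (fun u => z ⋖ u), W.m u / N := by
    intro z hz
    have hrz : W.rk z = 1 := by rw [W.rk_covBy y₁ z (mem_filter.1 hz).2.1, hy₁, zero_add]
    rw [UniformAt.m_eq_sum_div (i := 1) h₂ (by omega) hrz, sum_div]
  simp only [← nsmul_eq_mul, ← sum_const]
  rw [sum_congr rfl hm]
  refine sum_comm' fun z u => ?_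
  simp only [mem_filter, mem_univ, true_and, mem_commonCovers, mem_facesAbove]
  refine ⟨fun ⟨⟨h₁z, h₂z⟩, hzu⟩ => ⟨⟨h₁z, h₂z, hzu⟩, ?_, h₁z.lt.trans hzu.lt, h₂z.lt.trans hzu.lt⟩,
    by tauto⟩
  have := W.rk_covBy y₁ z h₁z
  have := W.rk_covBy z u hzu
  omega

theorem UniformAt.tl3 (h₁ : W.UniformAt 1 N₁) (h₂ : W.UniformAt 2 N₂)
    (hM : W.MiddleRegAt 1 M) (hM0 : M ≠ 0) (hR : W.WyeReg R) (hd : 2 ≤ W.d) :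
    W.TL3 (((N₂ : ℝ) * (N₁ : ℝ) / (M : ℝ) - 1) * (R : ℝ) * ((R : ℝ) - 1) /
      (((M : ℝ) - 1) * (M : ℝ) * ((N₁ : ℝ) - 1) ^ 2)) := by
  intro y hy
  have hsum := h₁.sum_zigzagWeight h₂ hM hM0 y y
  have hm := h₂.sum_m_commonUpperCovers hd hy y
  simp only [and_self] at hsum hm
  refine .trans ?_ hsum.symm
  rw [UniformAt.m_eq_sum_div (i := 0) h₁ (by omega) hy, hm, sum_div, mul_sum]
  refine sum_congr rfl fun u hu => ?_
  obtain ⟨hru, hyu, -⟩ := mem_facesAbove.1 hu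
  rw [hR.cast_card_zigzags_self hru (mem_verticesBelow.2 ⟨hy, hyu⟩),
    hM.card_commonCovers_self hru hy hyu, cast_card_verticesBelow (h₁.lowerRegAt zero_le_one)
      (h₂.lowerRegAt zero_le_two) hM hM0 hru]
  field_simp

theorem UniformAt.tl4 (h₁ : W.UniformAt 1 N₁) (h₂ : W.UniformAt 2 N₂)
    (hM : W.MiddleRegAt 1 M) (hM0 : M ≠ 0) (hR : W.WyeReg R) (hd : 2 ≤ W.d) :
    W.TL4 ((((N₂ : ℝ) * (N₁ : ℝ) / (M : ℝ) - 2) * (R : ℝ) - ((N₁ : ℝ) - 2)) /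
      (((M : ℝ) - 1) * ((N₁ : ℝ) - 1))) := by
  intro y₁ y₂ hy₁ hy₂ hne
  have hterm : ∀ z ∈ univ.filter (fun z => y₁ ⋖ z ∧ y₂ ⋖ z),
      W.m z * W.p z y₁ * W.p z y₂ / (1 - W.p z y₁) = W.m z / (N₁ * ((N₁ : ℝ) - 1)) := by
    intro z hz
    obtain ⟨h₁z, h₂z⟩ := (mem_filter.1 hz).2
    have hrz : W.rk z = 1 := by rw [W.rk_covBy y₁ z h₁z, hy₁, zero_add]
    have hN₁ := h₁.cast_ne_zero hrz h₁z
    rw [h₁.one_sub_p hrz h₁z, h₁ z y₁ hrz h₁z, h₁ z y₂ hrz h₂z]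
    field_simp
  refine .trans ?_ (h₁.sum_zigzagWeight h₂ hM hM0 y₁ y₂).symm
  rw [sum_congr rfl hterm, ← sum_div,
    h₂.sum_m_commonUpperCovers hd hy₁, sum_div, mul_sum]
  refine sum_congr rfl fun u hu => ?_
  obtain ⟨hru, hy₁u, hy₂u⟩ := mem_facesAbove.1 hu
  have hv₁ : y₁ ∈ W.verticesBelow u := mem_verticesBelow.2 ⟨hy₁, hy₁u⟩
  have hv₂ : y₂ ∈ W.verticesBelow u := mem_verticesBelow.2 ⟨hy₂, hy₂u⟩
  rw [hR.cast_card_zigzags_of_ne (h₁.lowerRegAt zero_le_one) hru hv₁ hv₂ hne,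
    hR.card_commonCovers hru hv₁ hv₂ hne, cast_card_verticesBelow (h₁.lowerRegAt zero_le_one)
      (h₂.lowerRegAt zero_le_two) hM hM0 hru]
  generalize ((N₂ : ℝ) * N₁ / M - 2) * R - (N₁ - 2) = c
  field_simp

end WGP

theorem stmt16_general {P : Type} [Fintype P] [PartialOrder P] (W : WGP P)
    (hd : 2 ≤ W.d) (N₁ : ℕ) (h₁ : W.UniformAt 1 N₁) (hN₁ : 2 ≤ N₁) :
    (W.TL1 (1 / ((N₁ : ℝ) - 1)) ∧ W.TL2 (((N₁ : ℝ) - 2) / ((N₁ : ℝ) - 1))) ∧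
    ∀ N₂ M R : ℕ, W.UniformAt 2 N₂ → W.MiddleRegAt 1 M → 2 ≤ M → W.WyeReg R →
      W.TL3 (((N₂ : ℝ) * (N₁ : ℝ) / (M : ℝ) - 1) * (R : ℝ) * ((R : ℝ) - 1) /
          (((M : ℝ) - 1) * (M : ℝ) * ((N₁ : ℝ) - 1) ^ 2)) ∧
      W.TL4 ((((N₂ : ℝ) * (N₁ : ℝ) / (M : ℝ) - 2) * (R : ℝ) - ((N₁ : ℝ) - 2)) /
          (((M : ℝ) - 1) * ((N₁ : ℝ) - 1))) :=
  ⟨⟨h₁.tl1 hN₁ (by omega), h₁.tl2⟩, fun _ _ _ h₂ hM hM2 hR =>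
    ⟨h₁.tl3 h₂ hM (by omega) hR hd, h₁.tl4 h₂ hM (by omega) hR hd⟩⟩

/-- standard posets with `2`-skeleton regularity satisfy the
TL equations with the stated constants. -/
theorem stmt16 {P : Type} [Fintype P] [PartialOrder P] (W : WGP P)
    (hd : 2 ≤ W.d) (hstd : W.Standard)
    (Nlow1 : ℕ) (hl1 : W.LowerRegAt 1 Nlow1) (hN1 : 2 ≤ Nlow1) :
    (W.TL1 (1 / ((Nlow1 : ℝ) - 1)) ∧
      W.TL2 (((Nlow1 : ℝ) - 2) / ((Nlow1 : ℝ) - 1))) ∧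
    ∀ Nlow2 Nmid1 R : ℕ,
      W.LowerRegAt 2 Nlow2 → W.MiddleRegAt 1 Nmid1 → 2 ≤ Nmid1 → W.WyeReg R →
      W.TL3 (((Nlow2 : ℝ) * (Nlow1 : ℝ) / (Nmid1 : ℝ) - 1) * (R : ℝ) * ((R : ℝ) - 1) /
          (((Nmid1 : ℝ) - 1) * (Nmid1 : ℝ) * ((Nlow1 : ℝ) - 1) ^ 2)) ∧
      W.TL4 ((((Nlow2 : ℝ) * (Nlow1 : ℝ) / (Nmid1 : ℝ) - 2) * (R : ℝ)
            - ((Nlow1 : ℝ) - 2)) /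
          (((Nmid1 : ℝ) - 1) * ((Nlow1 : ℝ) - 1))) := by
  have hgen := stmt16_general W hd Nlow1 (hstd.uniformAt hl1) hN1
  exact ⟨hgen.1, fun N₂ M R h₂ => hgen.2 N₂ M R (hstd.uniformAt h₂)⟩
end
end

section
/- Let P be a finite pure weighted graded poset of rank d ≥ 2 with a standard weight scheme in which every element of positive rank covers at least two elements. For f ∈ C^0 and x ∈ P(0), define f̂_x ∈ C^0(P_x) by f̂_x(z) = (1/(1−p_{z→x}))·Σ_{y≠x, y⋖z} p_{z→y} f(y). Then: (1) ⟨f̂_x, 1⟩_x = (A f)(x) for every f ∈ C^0 and x ∈ P(0); (2) if equations TL.1 and TL.2 hold with constants c^=_1, c^≠_1, then for all f, g ∈ C^0: Σ_{x∈P(0)} m(x)·⟨f̂_x, ĝ_x⟩_x = c^=_1·⟨f,g⟩ + c^≠_1·⟨Af, g⟩; (3) if equations TL.3 and TL.4 hold with constants c^=_2, c^≠_2 and c^≠_2 ≠ 0, then for all f, g ∈ C^0: ⟨Af, g⟩ = (1/c^≠_2)·(Σ_{x∈P(0)} m(x)·⟨A_x f̂_x, ĝ_x⟩_x − c^=_2·⟨f,g⟩).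 -/
open Finset

attribute [local instance] Classical.propDecidable

noncomputable section

/-!
For `x ∈ P(0)`, the map `f ↦ f̂_x` is linear, given by a matrix `H_x`, and `m(x)·⟨·,·⟩_x` is the
bilinear form of a diagonal matrix `D_x`. Hence the sums in (2) and (3) are the bilinear forms of
`∑ₓ H_xᵀ D_x H_x` and `∑ₓ H_xᵀ A_xᵀ D_x H_x`. The entries of these matrices at `(y₁, y₂)` are the
right-hand sides of TL.1 and TL.3 when `y₁ = y₂`, and of TL.2 and TL.4 when `y₁ ≠ y₂`, so the
equations of Property TL express both matrices through the Gram matrix `M` of `C^0` and `M A`.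
Both sums are thereby computed in terms of `⟨f, g⟩` and `⟨f, A g⟩` for every weight scheme. In (2)
one may exchange `f` and `g`, since the left-hand side is symmetric; in (3) one passes to `⟨A f, g⟩`
because a standard weight scheme makes `A` self-adjoint.
-/

namespace WGP

open Matrix

variable {P : Type} [Fintype P] [PartialOrder P] (W : WGP P)

lemma p_ne_zero_iff {z x : P} : W.p z x ≠ 0 ↔ x ⋖ z :=
  (W.p_nonneg z x).lt_iff_ne'.symm.trans (W.p_pos_iff z x)

lemma rk_strictMono : StrictMono W.rk := by
  let : LocallyFiniteOrder P := Fintype.toLocallyFiniteOrder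
  refine (strictMono_iff_forall_covBy W.rk).2 fun a b hab => ?_
  rw [W.rk_covBy a b hab]
  exact lt_add_one _

lemma covBy_iff_le_and_rk_eq {x z : P} : x ⋖ z ↔ x ≤ z ∧ W.rk z = W.rk x + 1 := by
  refine ⟨fun h => ⟨h.le, W.rk_covBy x z h⟩, fun ⟨hle, hrk⟩ => ?_⟩
  refine ⟨lt_of_le_of_ne hle (by rintro rfl; omega), fun c hxc hcz => ?_⟩
  have := W.rk_strictMono hxc
  have := W.rk_strictMono hcz
  omega

lemma rk_eq_of_covBy_of_covBy {x y z : P} (hx : x ⋖ z) (hy : y ⋖ z) : W.rk x = W.rk y := by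
  have := W.rk_covBy x z hx
  have := W.rk_covBy y z hy
  omega

lemma chSum_eq_p {x z : P} (h : W.rk z = W.rk x + 1) : W.chSum x z = W.p z x := by
  simp [chSum, upMat, h]

/-- The Gram matrix of the inner product on `C^i`, extended by zero from `P(i)` to all of `P`. -/
def gram (i : ℤ) : Matrix P P ℝ := diagonal fun y => if W.rk y = i then W.m y else 0

/-- The Gram matrix of `m(x)·⟨·,·⟩_x` on `C^0(P_x)`, where `m(x)·m_x(z) = m(z)·p_{z→x}`; it is
extended by zero from the elements covering `x` to all of `P`. -/
def linkGram (x : P) : Matrix P P ℝ := diagonal fun z => W.m z * W.p z x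

/-- The matrix of the linear map `f ↦ f̂_x`. -/
def hatMat (x : P) : Matrix P P ℝ :=
  Matrix.of fun z y => if y = x then 0 else W.p z y / (1 - W.p z x)

/-- The matrix of the sum over `x ∈ P(0)` of the bilinear forms `(f, g) ↦ T_x(f̂_x, ĝ_x)`, where
`T x` is the matrix of a form `T_x` on `C^0(P_x)`. -/
def hatForm (T : P → Matrix P P ℝ) : Matrix P P ℝ :=
  ∑ x ∈ W.lvl 0, (W.hatMat x)ᵀ * T x * W.hatMat x

lemma innerAt_eq_dotProduct (i : ℤ) (f g : P → ℝ) : W.innerAt i f g = f ⬝ᵥ W.gram i *ᵥ g := by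
  simp only [innerAt, lvl, sum_filter, gram, mulVec_diagonal, dotProduct]
  exact sum_congr rfl fun y _ => by split_ifs <;> ring

lemma innerAt_comm (i : ℤ) (f g : P → ℝ) : W.innerAt i f g = W.innerAt i g f :=
  sum_congr rfl fun _ _ => mul_right_comm _ _ _

lemma innerL_comm (x : P) (j : ℤ) (f g : P → ℝ) : W.innerL x j f g = W.innerL x j g f :=
  sum_congr rfl fun _ _ => mul_right_comm _ _ _

lemma m_mul_innerL_zero (x : P) (F G : P → ℝ) :
    W.m x * W.innerL x 0 F G = F ⬝ᵥ W.linkGram x *ᵥ G := by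
  have hlvl : W.linkLvl x 0 = univ.filter fun z => x ⋖ z := by
    simp only [linkLvl, add_zero, ← W.covBy_iff_le_and_rk_eq]
  have hsupp : ∀ z ∈ univ, F z * (W.m z * W.p z x * G z) ≠ 0 → x ⋖ z := fun z _ h =>
    W.p_ne_zero_iff.1 (right_ne_zero_of_mul (left_ne_zero_of_mul (right_ne_zero_of_mul h)))
  simp only [linkGram, mulVec_diagonal, dotProduct]
  rw [innerL, hlvl, mul_sum, ← sum_filter_of_ne hsupp]
  refine sum_congr rfl fun z hz => ?_
  rw [mL, W.chSum_eq_p (W.rk_covBy x z (by simpa using hz))]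
  have := (W.m_pos x).ne'
  field_simp

lemma hatMat_ne_zero {x y z : P} (h : W.hatMat x z y ≠ 0) : y ≠ x ∧ y ⋖ z := by
  simp only [hatMat, of_apply, ne_eq, ite_eq_left_iff, div_eq_zero_iff, not_forall, not_or] at h
  obtain ⟨hyx, hp, -⟩ := h
  exact ⟨hyx, W.p_ne_zero_iff.1 hp⟩

lemma hatF_eq_mulVec (x : P) (f : P → ℝ) : W.hatF x f = W.hatMat x *ᵥ f := by
  ext z
  rw [mulVec, dotProduct,
    ← sum_filter_of_ne fun y _ h => W.hatMat_ne_zero (left_ne_zero_of_mul h), hatF, mul_sum]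
  refine sum_congr rfl fun y hy => ?_
  rw [hatMat, of_apply, if_neg (mem_filter.1 hy).2.1]
  ring

lemma m_mul_adjMat_apply {y₁ y₂ : P} (h : y₁ ≠ y₂) :
    W.m y₁ * W.adjMat y₁ y₂ = ∑ z ∈ univ.filter (fun z => y₁ ⋖ z ∧ y₂ ⋖ z),
      W.m z * W.p z y₁ * W.p z y₂ / (1 - W.p z y₁) := by
  rw [adjMat, of_apply, if_neg h.symm, mul_sum]
  simp only [and_comm (a := y₂ ⋖ _)]
  refine sum_congr rfl fun z _ => ?_
  have := (W.m_pos y₁).ne'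
  rw [← div_div, mul_div_cancel₀ _ this, mul_right_comm]

lemma rk_eq_of_adjMat_ne_zero {y₁ y₂ : P} (h : W.adjMat y₁ y₂ ≠ 0) : W.rk y₁ = W.rk y₂ := by
  rw [adjMat, of_apply] at h
  obtain ⟨z, hz, -⟩ := exists_ne_zero_of_sum_ne_zero (ite_ne_left_iff.1 h).2.symm
  obtain ⟨h₂, h₁⟩ := (mem_filter.1 hz).2
  exact W.rk_eq_of_covBy_of_covBy h₁ h₂

lemma vecMul_hatMat (x : P) :
    (fun z => W.m z * W.p z x) ᵥ* W.hatMat x = W.m x • W.adjMat x := by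
  ext y
  rw [vecMul, dotProduct, Pi.smul_apply, smul_eq_mul]
  by_cases hyx : x = y
  · simp [hatMat, adjMat, hyx]
  have hsupp : ∀ z ∈ univ, W.m z * W.p z x * W.hatMat x z y ≠ 0 → x ⋖ z ∧ y ⋖ z := fun z _ h =>
    ⟨W.p_ne_zero_iff.1 (right_ne_zero_of_mul (left_ne_zero_of_mul h)),
      (W.hatMat_ne_zero (right_ne_zero_of_mul h)).2⟩
  rw [W.m_mul_adjMat_apply hyx, ← sum_filter_of_ne hsupp]
  refine sum_congr rfl fun z _ => ?_
  rw [hatMat, of_apply, if_neg (Ne.symm hyx), mul_div_assoc]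

theorem innerL_hatF_one (x : P) (f : P → ℝ) :
    W.innerL x 0 (W.hatF x f) (fun _ => 1) = W.Adj f x := by
  refine mul_left_cancel₀ (W.m_pos x).ne' ?_
  have hone : W.linkGram x *ᵥ (fun _ => 1) = fun z => W.m z * W.p z x := by
    ext z
    simp only [linkGram, mulVec_diagonal, mul_one]
  rw [m_mul_innerL_zero, hone, hatF_eq_mulVec, dotProduct_comm, dotProduct_mulVec, vecMul_hatMat,
    smul_dotProduct, smul_eq_mul]
  rfl

lemma innerAt_Adj_eq_dotProduct (i : ℤ) (f g : P → ℝ) :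
    W.innerAt i f (W.Adj g) = f ⬝ᵥ (W.gram i * W.adjMat) *ᵥ g := by
  rw [innerAt_eq_dotProduct, Adj, mulVec_mulVec]

lemma gram_mul_adjMat_apply (i : ℤ) (y₁ y₂ : P) :
    (W.gram i * W.adjMat) y₁ y₂ = if W.rk y₁ = i then W.m y₁ * W.adjMat y₁ y₂ else 0 := by
  rw [gram, diagonal_mul, ite_mul, zero_mul]

lemma Standard.p_eq {W : WGP P} (hstd : W.Standard) {x y z : P} (hx : x ⋖ z) (hy : y ⋖ z) :
    W.p z x = W.p z y :=
  (hstd z x hx).trans (hstd z y hy).symm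

lemma Standard.m_mul_adjMat_comm {W : WGP P} (hstd : W.Standard) (y₁ y₂ : P) :
    W.m y₁ * W.adjMat y₁ y₂ = W.m y₂ * W.adjMat y₂ y₁ := by
  rcases eq_or_ne y₁ y₂ with rfl | h
  · rfl
  rw [W.m_mul_adjMat_apply h, W.m_mul_adjMat_apply h.symm]
  simp only [and_comm (a := y₂ ⋖ _)]
  refine sum_congr rfl fun z hz => ?_
  rw [hstd.p_eq (mem_filter.1 hz).2.1 (mem_filter.1 hz).2.2]

theorem Standard.innerAt_Adj_comm {W : WGP P} (hstd : W.Standard) (i : ℤ) (f g : P → ℝ) :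
    W.innerAt i (W.Adj f) g = W.innerAt i f (W.Adj g) := by
  have hsymm : (W.gram i * W.adjMat)ᵀ = W.gram i * W.adjMat := by
    ext y₁ y₂
    rw [transpose_apply, gram_mul_adjMat_apply, gram_mul_adjMat_apply, hstd.m_mul_adjMat_comm]
    by_cases h : W.adjMat y₁ y₂ = 0
    · simp only [h, mul_zero, ite_self]
    · rw [W.rk_eq_of_adjMat_ne_zero h]
  rw [innerAt_comm, innerAt_Adj_eq_dotProduct, innerAt_Adj_eq_dotProduct, dotProduct_mulVec,
    dotProduct_comm, ← mulVec_transpose, hsymm]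

lemma dotProduct_hatForm_mulVec (T : P → Matrix P P ℝ) (f g : P → ℝ) :
    f ⬝ᵥ W.hatForm T *ᵥ g = ∑ x ∈ W.lvl 0, W.hatF x f ⬝ᵥ T x *ᵥ W.hatF x g := by
  rw [hatForm, sum_mulVec, dotProduct_sum]
  refine sum_congr rfl fun x _ => ?_
  rw [hatF_eq_mulVec, hatF_eq_mulVec, Matrix.mul_assoc, ← mulVec_mulVec, ← mulVec_mulVec,
    dotProduct_mulVec, vecMul_transpose]

lemma hatForm_apply (T : P → Matrix P P ℝ) (y₁ y₂ : P) :
    W.hatForm T y₁ y₂ = ∑ x ∈ univ.filter (fun x => W.rk x = 0 ∧ x ≠ y₁ ∧ x ≠ y₂),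
      ∑ z, ∑ w, W.p w y₁ / (1 - W.p w x) * T x w z * (W.p z y₂ / (1 - W.p z x)) := by
  have hsupp : ∀ x ∈ W.lvl 0, ((W.hatMat x)ᵀ * T x * W.hatMat x) y₁ y₂ ≠ 0 →
      x ≠ y₁ ∧ x ≠ y₂ := by
    intro x _ h
    refine ⟨?_, ?_⟩ <;> rintro rfl <;> exact h (by simp [Matrix.mul_apply, hatMat])
  rw [hatForm, Matrix.sum_apply, ← sum_filter_of_ne hsupp, lvl, filter_filter]
  refine sum_congr rfl fun x hx => ?_
  obtain ⟨-, h₁, h₂⟩ := (mem_filter.1 hx).2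
  simp only [Matrix.mul_apply, sum_mul, transpose_apply, hatMat, of_apply, if_neg h₁.symm,
    if_neg h₂.symm]

lemma hatForm_apply_of_support {T : P → Matrix P P ℝ}
    (hT : ∀ x w z, T x w z ≠ 0 → x ⋖ w ∧ x ⋖ z) (y₁ y₂ : P) :
    W.hatForm T y₁ y₂ = ∑ x ∈ univ.filter (fun x => W.rk x = 0 ∧ x ≠ y₁ ∧ x ≠ y₂),
      ∑ z ∈ univ.filter (fun z => x ⋖ z ∧ y₂ ⋖ z), ∑ w ∈ univ.filter (fun w => x ⋖ w ∧ y₁ ⋖ w),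
        W.p w y₁ / (1 - W.p w x) * T x w z * (W.p z y₂ / (1 - W.p z x)) := by
  have hterm : ∀ x w z, W.p w y₁ / (1 - W.p w x) * T x w z * (W.p z y₂ / (1 - W.p z x)) ≠ 0 →
      (x ⋖ w ∧ y₁ ⋖ w) ∧ x ⋖ z ∧ y₂ ⋖ z := by
    intro x w z h
    simp only [mul_ne_zero_iff, div_ne_zero_iff, W.p_ne_zero_iff] at h
    obtain ⟨⟨⟨hw, -⟩, hTxwz⟩, hz, -⟩ := h
    exact ⟨⟨(hT x w z hTxwz).1, hw⟩, (hT x w z hTxwz).2, hz⟩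
  rw [hatForm_apply]
  refine sum_congr rfl fun x _ => ?_
  rw [← sum_filter_of_ne (p := fun z => x ⋖ z ∧ y₂ ⋖ z)]
  · exact sum_congr rfl fun z _ => (sum_filter_of_ne fun w _ h => (hterm x w z h).1).symm
  · intro z _ h
    obtain ⟨w, -, hw⟩ := exists_ne_zero_of_sum_ne_zero h
    exact (hterm x w z hw).2

lemma rk_eq_zero_of_hatForm_ne_zero {T : P → Matrix P P ℝ}
    (hT : ∀ x w z, T x w z ≠ 0 → x ⋖ w ∧ x ⋖ z) {y₁ y₂ : P} (h : W.hatForm T y₁ y₂ ≠ 0) :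
    W.rk y₁ = 0 ∧ W.rk y₂ = 0 := by
  rw [W.hatForm_apply_of_support hT] at h
  obtain ⟨x, hx, h⟩ := exists_ne_zero_of_sum_ne_zero h
  obtain ⟨z, hz, h⟩ := exists_ne_zero_of_sum_ne_zero h
  obtain ⟨w, hw, -⟩ := exists_ne_zero_of_sum_ne_zero h
  have hx₀ : W.rk x = 0 := (mem_filter.1 hx).2.1
  obtain ⟨hxz, hyz⟩ := (mem_filter.1 hz).2
  obtain ⟨hxw, hyw⟩ := (mem_filter.1 hw).2
  exact ⟨(W.rk_eq_of_covBy_of_covBy hyw hxw).trans hx₀,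
    (W.rk_eq_of_covBy_of_covBy hyz hxz).trans hx₀⟩

lemma hatForm_eq_smul_gram_add {T : P → Matrix P P ℝ}
    (hT : ∀ x w z, T x w z ≠ 0 → x ⋖ w ∧ x ⋖ z) {c c' : ℝ}
    (hdiag : ∀ y, W.rk y = 0 → W.hatForm T y y = c * W.m y)
    (hoff : ∀ y₁ y₂, W.rk y₁ = 0 → W.rk y₂ = 0 → y₁ ≠ y₂ →
      W.hatForm T y₁ y₂ = c' * (W.m y₁ * W.adjMat y₁ y₂)) :
    W.hatForm T = c • W.gram 0 + c' • (W.gram 0 * W.adjMat) := by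
  ext y₁ y₂
  rw [Matrix.add_apply, Matrix.smul_apply, Matrix.smul_apply, gram_mul_adjMat_apply, smul_eq_mul,
    smul_eq_mul, gram]
  by_cases hrk : W.rk y₁ = 0 ∧ W.rk y₂ = 0
  · obtain ⟨h₁, h₂⟩ := hrk
    rcases eq_or_ne y₁ y₂ with rfl | hne
    · simp [hdiag y₁ h₁, h₁, adjMat]
    · simp [hoff y₁ y₂ h₁ h₂ hne, h₁, hne]
  · rw [not_imp_comm.1 (W.rk_eq_zero_of_hatForm_ne_zero hT) hrk]
    by_cases h₁ : W.rk y₁ = 0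
    · have hne : W.rk y₁ ≠ W.rk y₂ := fun h => hrk ⟨h₁, h ▸ h₁⟩
      simp [not_imp_comm.1 W.rk_eq_of_adjMat_ne_zero hne, ne_of_apply_ne W.rk hne]
    · simp [h₁, diagonal_apply]

lemma sum_hatF_eq_of_hatForm_eq {T : P → Matrix P P ℝ} {c c' : ℝ}
    (h : W.hatForm T = c • W.gram 0 + c' • (W.gram 0 * W.adjMat)) (f g : P → ℝ) :
    ∑ x ∈ W.lvl 0, W.hatF x f ⬝ᵥ T x *ᵥ W.hatF x g
      = c * W.innerAt 0 f g + c' * W.innerAt 0 f (W.Adj g) := by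
  rw [← dotProduct_hatForm_mulVec, h, add_mulVec, smul_mulVec, smul_mulVec, dotProduct_add,
    dotProduct_smul, dotProduct_smul, ← innerAt_eq_dotProduct, ← innerAt_Adj_eq_dotProduct,
    smul_eq_mul, smul_eq_mul]

lemma covBy_of_linkGram_ne_zero (x w z : P) (h : W.linkGram x w z ≠ 0) : x ⋖ w ∧ x ⋖ z := by
  rw [linkGram, diagonal_apply] at h
  obtain ⟨rfl, hne⟩ := ite_ne_right_iff.1 h
  have hw := W.p_ne_zero_iff.1 (right_ne_zero_of_mul hne)
  exact ⟨hw, hw⟩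

lemma hatForm_linkGram_apply {y₁ : P} (hy₁ : W.rk y₁ = 0) (y₂ : P) :
    W.hatForm W.linkGram y₁ y₂ = ∑ z ∈ univ.filter (fun z => y₁ ⋖ z ∧ y₂ ⋖ z),
      W.m z * W.p z y₁ * W.p z y₂ *
        ∑ x ∈ univ.filter (fun x => x ⋖ z ∧ x ≠ y₁ ∧ x ≠ y₂), W.p z x / (1 - W.p z x) ^ 2 := by
  have hterm : ∀ x z, W.p z y₁ / (1 - W.p z x) * (W.m z * W.p z x) * (W.p z y₂ / (1 - W.p z x)) ≠ 0
      → x ⋖ z ∧ y₁ ⋖ z ∧ y₂ ⋖ z := by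
    intro x z h
    simp only [mul_ne_zero_iff, div_ne_zero_iff, W.p_ne_zero_iff] at h
    exact ⟨h.1.2.2, h.1.1.1, h.2.1⟩
  have hcollapse : ∀ x z, ∑ w, W.p w y₁ / (1 - W.p w x) * W.linkGram x w z *
      (W.p z y₂ / (1 - W.p z x)) =
      W.p z y₁ / (1 - W.p z x) * (W.m z * W.p z x) * (W.p z y₂ / (1 - W.p z x)) := by
    intro x z
    simp [linkGram, diagonal_apply]
  rw [hatForm_apply]
  simp only [hcollapse, mul_sum]
  rw [sum_congr rfl fun x _ => (sum_filter_of_ne fun z _ h => hterm x z h).symm]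
  rw [sum_comm' (t' := univ.filter (fun z => y₁ ⋖ z ∧ y₂ ⋖ z))
    (s' := fun z => univ.filter (fun x => x ⋖ z ∧ x ≠ y₁ ∧ x ≠ y₂))]
  · exact sum_congr rfl fun z _ => sum_congr rfl fun x _ => by
      generalize 1 - W.p z x = k
      ring
  · intro x z
    simp only [mem_filter, mem_univ, true_and]
    constructor
    · tauto
    · rintro ⟨⟨hx, hne⟩, h₁, h₂⟩
      exact ⟨⟨(W.rk_eq_of_covBy_of_covBy hx h₁).trans hy₁, hne⟩, hx, h₁, h₂⟩

lemma hatForm_linkGram_eq {c c' : ℝ} (h₁ : W.TL1 c) (h₂ : W.TL2 c') :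
    W.hatForm W.linkGram = c • W.gram 0 + c' • (W.gram 0 * W.adjMat) := by
  refine W.hatForm_eq_smul_gram_add W.covBy_of_linkGram_ne_zero ?_ ?_
  · intro y hy
    simp only [W.hatForm_linkGram_apply hy, h₁ y hy, and_self, sq, mul_assoc]
  · intro y₁ y₂ hy₁ hy₂ hne
    rw [W.m_mul_adjMat_apply hne, h₂ y₁ y₂ hy₁ hy₂ hne, W.hatForm_linkGram_apply hy₁]

theorem sum_innerL_hatF {c c' : ℝ} (h₁ : W.TL1 c) (h₂ : W.TL2 c') (f g : P → ℝ) :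
    ∑ x ∈ W.lvl 0, W.m x * W.innerL x 0 (W.hatF x f) (W.hatF x g)
      = c * W.innerAt 0 f g + c' * W.innerAt 0 f (W.Adj g) := by
  simp only [m_mul_innerL_zero]
  exact W.sum_hatF_eq_of_hatForm_eq (W.hatForm_linkGram_eq h₁ h₂) f g

lemma linkGram_mul_adjMatL_apply (x z w : P) :
    (W.linkGram x * W.adjMatL x) z w = if w = z then 0 else
      ∑ u ∈ univ.filter (fun u => z ⋖ u ∧ w ⋖ u),
        W.m u * W.p u z * W.p u w * W.p w x * W.p z x /
          (W.chSum x u * (1 - W.p u z * W.p z x / W.chSum x u)) := by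
  rw [linkGram, diagonal_mul, adjMatL, of_apply]
  split_ifs with hwz
  · exact mul_zero _
  by_cases hxz : x ⋖ z
  swap
  · simp [not_imp_comm.1 W.p_ne_zero_iff.1 hxz]
  rw [mul_sum]
  simp only [and_comm (a := w ⋖ _)]
  refine sum_congr rfl fun u hu => ?_
  obtain ⟨hzu, hwu⟩ := (mem_filter.1 hu).2
  have hz := W.rk_covBy x z hxz
  have hw : W.rk w = W.rk x + 1 := (W.rk_eq_of_covBy_of_covBy hwu hzu).trans hz
  have hm := (W.m_pos x).ne'
  have hmz := (W.m_pos z).ne'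
  have hp := W.p_ne_zero_iff.2 hxz
  rw [pL, pL, mL, mL, W.chSum_eq_p hz, W.chSum_eq_p hw]
  rcases eq_or_ne (W.chSum x u) 0 with hu | hu
  · simp [hu]
  · generalize 1 - W.p u z * W.p z x / W.chSum x u = k
    rcases eq_or_ne k 0 with hk | hk
    · simp [hk]
    · field_simp

lemma covBy_of_linkGram_mul_adjMatL_ne_zero (x w z : P)
    (h : (W.linkGram x * W.adjMatL x)ᵀ w z ≠ 0) : x ⋖ w ∧ x ⋖ z := by
  rw [transpose_apply, linkGram_mul_adjMatL_apply] at h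
  obtain ⟨u, -, hu⟩ := exists_ne_zero_of_sum_ne_zero (ite_ne_left_iff.1 h).2.symm
  simp only [mul_ne_zero_iff, div_ne_zero_iff, W.p_ne_zero_iff] at hu
  exact ⟨hu.1.1.2, hu.1.2⟩

lemma hatForm_linkGram_mul_adjMatL_apply (y₁ y₂ : P) :
    W.hatForm (fun x => (W.linkGram x * W.adjMatL x)ᵀ) y₁ y₂ =
      ∑ x ∈ univ.filter (fun x => W.rk x = 0 ∧ x ≠ y₁ ∧ x ≠ y₂),
        ∑ z ∈ univ.filter (fun z => x ⋖ z ∧ y₂ ⋖ z),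
          ∑ w ∈ univ.filter (fun w => w ≠ z ∧ x ⋖ w ∧ y₁ ⋖ w),
            ∑ u ∈ univ.filter (fun u => z ⋖ u ∧ w ⋖ u),
              W.m u * W.p u z * W.p u w * W.p w y₁ * W.p z y₂ * W.p w x * W.p z x /
                (W.chSum x u * (1 - W.p u z * W.p z x / W.chSum x u) *
                  (1 - W.p w x) * (1 - W.p z x)) := by
  rw [W.hatForm_apply_of_support W.covBy_of_linkGram_mul_adjMatL_ne_zero]
  refine sum_congr rfl fun x _ => sum_congr rfl fun z _ => ?_
  have hne : ∀ w, W.p w y₁ / (1 - W.p w x) * (W.linkGram x * W.adjMatL x)ᵀ w z *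
      (W.p z y₂ / (1 - W.p z x)) ≠ 0 → w ≠ z := by
    rintro w h rfl
    exact h (by simp [linkGram_mul_adjMatL_apply])
  rw [← sum_filter_of_ne fun w _ => hne w, filter_filter]
  simp only [and_comm (b := _ ≠ z)]
  refine sum_congr rfl fun w hw => ?_
  rw [transpose_apply, linkGram_mul_adjMatL_apply, if_neg (mem_filter.1 hw).2.1, mul_sum, sum_mul]
  refine sum_congr rfl fun u _ => ?_
  simp only [div_eq_mul_inv, mul_inv]
  ring

lemma hatForm_linkGram_mul_adjMatL_eq {c c' : ℝ} (h₃ : W.TL3 c) (h₄ : W.TL4 c') :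
    W.hatForm (fun x => (W.linkGram x * W.adjMatL x)ᵀ)
      = c • W.gram 0 + c' • (W.gram 0 * W.adjMat) := by
  refine W.hatForm_eq_smul_gram_add W.covBy_of_linkGram_mul_adjMatL_ne_zero ?_ ?_
  · intro y hy
    simp only [hatForm_linkGram_mul_adjMatL_apply, h₃ y hy, and_self]
  · intro y₁ y₂ hy₁ hy₂ hne
    rw [W.m_mul_adjMat_apply hne, h₄ y₁ y₂ hy₁ hy₂ hne, hatForm_linkGram_mul_adjMatL_apply]

theorem sum_innerL_AdjL_hatF {c c' : ℝ} (h₃ : W.TL3 c) (h₄ : W.TL4 c') (f g : P → ℝ) :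
    ∑ x ∈ W.lvl 0, W.m x * W.innerL x 0 (W.AdjL x (W.hatF x f)) (W.hatF x g)
      = c * W.innerAt 0 f g + c' * W.innerAt 0 f (W.Adj g) := by
  rw [← W.sum_hatF_eq_of_hatForm_eq (W.hatForm_linkGram_mul_adjMatL_eq h₃ h₄) f g]
  refine sum_congr rfl fun x _ => ?_
  rw [innerL_comm, m_mul_innerL_zero, AdjL, mulVec_mulVec, dotProduct_mulVec, dotProduct_comm,
    ← mulVec_transpose]

end WGP

theorem stmt17_general {P : Type} [Fintype P] [PartialOrder P] (W : WGP P)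
    (_hcov : ∀ y : P, 1 ≤ W.rk y → 2 ≤ (Finset.univ.filter (fun z => z ⋖ y)).card)
    (c1e c1n c2e c2n : ℝ) :
    (∀ f : P → ℝ, ∀ x : P, W.rk x = 0 →
      W.innerL x 0 (W.hatF x f) (fun _ => 1) = W.Adj f x) ∧
    (W.TL1 c1e → W.TL2 c1n → ∀ f g : P → ℝ,
      ∑ x ∈ W.lvl 0, W.m x * W.innerL x 0 (W.hatF x f) (W.hatF x g)
        = c1e * W.innerAt 0 f g + c1n * W.innerAt 0 (W.Adj f) g) ∧
    (W.TL3 c2e → W.TL4 c2n → c2n ≠ 0 → ∀ f g : P → ℝ,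
      W.innerAt 0 f (W.Adj g)
        = (1 / c2n) *
            ((∑ x ∈ W.lvl 0, W.m x * W.innerL x 0 (W.AdjL x (W.hatF x f)) (W.hatF x g))
              - c2e * W.innerAt 0 f g)) := by
  refine ⟨fun f x _ => W.innerL_hatF_one x f, fun h₁ h₂ f g => ?_, fun h₃ h₄ hc f g => ?_⟩
  · rw [W.innerAt_comm 0 f g, W.innerAt_comm 0 (W.Adj f) g, ← W.sum_innerL_hatF h₁ h₂ g f]
    exact sum_congr rfl fun x _ => by rw [W.innerL_comm]
  · rw [W.sum_innerL_AdjL_hatF h₃ h₄ f g]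
    field_simp
    ring

/-- properties of the induced function `f̂`. -/
theorem stmt17 {P : Type} [Fintype P] [PartialOrder P] (W : WGP P)
    (hd : 2 ≤ W.d) (hstd : W.Standard)
    (hcov : ∀ y : P, 1 ≤ W.rk y → 2 ≤ (Finset.univ.filter (fun z => z ⋖ y)).card)
    (c1e c1n c2e c2n : ℝ) :
    (∀ f : P → ℝ, ∀ x : P, W.rk x = 0 →
      W.innerL x 0 (W.hatF x f) (fun _ => 1) = W.Adj f x) ∧
    (W.TL1 c1e → W.TL2 c1n → ∀ f g : P → ℝ,
      ∑ x ∈ W.lvl 0, W.m x * W.innerL x 0 (W.hatF x f) (W.hatF x g)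
        = c1e * W.innerAt 0 f g + c1n * W.innerAt 0 (W.Adj f) g) ∧
    (W.TL3 c2e → W.TL4 c2n → c2n ≠ 0 → ∀ f g : P → ℝ,
      W.innerAt 0 (W.Adj f) g
        = (1 / c2n) *
            ((∑ x ∈ W.lvl 0, W.m x * W.innerL x 0 (W.AdjL x (W.hatF x f)) (W.hatF x g))
              - c2e * W.innerAt 0 f g)) := by
  obtain ⟨h₁, h₂, h₃⟩ := stmt17_general W hcov c1e c1n c2e c2n
  exact ⟨h₁, h₂, by simpa only [hstd.innerAt_Adj_comm] using h₃⟩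
end
end
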